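/- With W^{(q)} the q-scale function and Φ_{θ+q} the largest root of ψ = θ+q, define W_y^{(θ+q,-θ)}(x+y) := W^{(θ+q)}(x+y) - θ ∫_0^x W^{(q)}(w) W^{(θ+q)}(x+y-w) dw. Then for every fixed x ≥ 0, lim_{y→∞} W_y^{(θ+q,-θ)}(x+y) / (θ W^{(θ+q)}(y)) = ∫_0^∞ W^{(q)}(x+w) e^{-Φ_{θ+q} w} dw. -/

import Mathlib

open Set Filter MeasureTheory

/-- Local uniform boundedness of increments (Baire category argument). -/
theorem incr_bounded (g : ℝ → ℝ) (hg : Continuous g)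
    (h : ∀ u, Tendsto (fun y => g (u + y) - g y) atTop (nhds 0)) (x : ℝ) (hx : 0 ≤ x) :
    ∃ C Y : ℝ, ∀ u ∈ Icc 0 x, ∀ y ≥ Y, |g (u + y) - g y| ≤ C := by
  let F : ℕ → Set ℝ := fun n => {u | ∀ y : ℝ, (n : ℝ) ≤ y → |g (u + y) - g y| ≤ 1}
  have hFc : ∀ n, IsClosed (F n) := by
    intro n
    have : F n = ⋂ (y : ℝ) (_ : (n : ℝ) ≤ y), {u | |g (u + y) - g y| ≤ 1} := by
      ext u; simp [F]
    rw [this]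
    refine isClosed_iInter fun y => isClosed_iInter fun _ => ?_
    exact isClosed_le (by fun_prop) continuous_const
  have hFU : ⋃ n, F n = univ := by
    refine eq_univ_of_forall fun u => ?_
    have h1 : ∀ᶠ y in atTop, |g (u + y) - g y| < 1 := by
      have := (h u).abs
      rw [abs_zero] at this
      exact this.eventually (gt_mem_nhds one_pos)
    obtain ⟨Y, hY⟩ := eventually_atTop.1 h1
    obtain ⟨n, hn⟩ := exists_nat_ge Y
    exact mem_iUnion.2 ⟨n, fun y hy => (hY y (hn.trans hy)).le⟩
  obtain ⟨n, a, ha⟩ := nonempty_interior_of_iUnion_of_closed hFc hFU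
  obtain ⟨δ, hδ, hb⟩ := Metric.isOpen_iff.1 isOpen_interior a ha
  have haF : ∀ y : ℝ, (n : ℝ) ≤ y → |g (a + y) - g y| ≤ 1 := interior_subset ha
  have key : ∀ t : ℝ, |t| < δ → ∀ y : ℝ, n + a ≤ y → |g (t + y) - g y| ≤ 2 := by
    intro t ht y hy
    have h1 : a + t ∈ F n := interior_subset (hb (by simpa [Real.dist_eq] using ht))
    have h2 := h1 (y - a) (by linarith)
    have h3 := haF (y - a) (by linarith)
    have e1 : a + t + (y - a) = t + y := by ring
    have e2 : a + (y - a) = y := by ring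
    rw [e1] at h2
    rw [e2] at h3
    rw [abs_le] at *
    constructor <;> linarith [h2.1, h2.2, h3.1, h3.2]
  have iter : ∀ t : ℝ, 0 ≤ t → t < δ → ∀ k : ℕ, ∀ y : ℝ, n + a ≤ y →
      |g (k * t + y) - g y| ≤ 2 * k := by
    intro t ht htδ k
    induction k with
    | zero => intro y _; simp
    | succ k ih =>
      intro y hy
      have h1 := ih y hy
      have h2 := key t (by rwa [abs_of_nonneg ht]) (k * t + y) (by
        have : 0 ≤ (k : ℝ) * t := by positivity
        linarith)
      have e : t + (k * t + y) = ((k + 1 : ℕ) : ℝ) * t + y := by push_cast; ring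
      rw [e] at h2
      push_cast at *
      rw [abs_le] at *
      constructor <;> linarith [h2.1, h2.2, h1.1, h1.2]
  obtain ⟨N, hN⟩ := exists_nat_gt (x / δ)
  have hN0 : (0 : ℝ) < N := lt_of_le_of_lt (by positivity) hN
  refine ⟨2 * N, n + a, fun u hu y hy => ?_⟩
  have h1 := iter (u / N) (div_nonneg hu.1 hN0.le) (by
    rw [div_lt_iff₀ hN0]
    rw [div_lt_iff₀ hδ] at hN
    linarith [hu.2]) N y hy
  rwa [mul_div_cancel₀ _ hN0.ne'] at h1

/-- Limit of `W_y^{(θ+q,-θ)}(x+y) / (θ W^{(θ+q)}(y))` as `y → ∞`, where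
`W_y^{(θ+q,-θ)}(x+y) = W^{(θ+q)}(x+y) - θ ∫_0^x W^{(q)}(w) W^{(θ+q)}(x+y-w) dw`,
`φ = Φ_{θ+q}`, given the ratio asymptotics for `W^{(θ+q)}` and
`∫_0^∞ W^{(q)}(w) e^{-φ w} dw = 1/θ`. -/
theorem doubly_killed_scale_ratio_limit
    (Wq Wpq : ℝ → ℝ) (θ q φ x : ℝ)
    (hθ : 0 < θ) (hq : 0 ≤ q) (hx : 0 ≤ x)
    (hWqcont : Continuous Wq) (hWqnn : ∀ w, 0 ≤ Wq w)
    (hWpqpos : ∀ y > 0, 0 < Wpq y) (hWpqcont : Continuous Wpq)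
    (hasymp : ∀ u : ℝ,
      Tendsto (fun y => Wpq (u + y) / Wpq y) atTop (nhds (Real.exp (φ * u))))
    (hLT : (∫ w in Ioi (0:ℝ), Wq w * Real.exp (-φ * w)) = 1 / θ) :
    Tendsto (fun y =>
        (Wpq (x + y) - θ * ∫ w in (0:ℝ)..x, Wq w * Wpq (x + y - w))
          / (θ * Wpq y))
      atTop (nhds (∫ w in Ioi (0:ℝ), Wq (x + w) * Real.exp (-φ * w))) := by
  -- ratio bound
  obtain ⟨C, hC⟩ : ∃ C : ℝ, ∀ᶠ y in atTop, ∀ u ∈ Icc 0 x, |Wpq (u + y) / Wpq y| ≤ C := by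
    let g : ℝ → ℝ := fun y => Real.log (Wpq (max y 1)) - φ * y
    have hpos : ∀ y, 0 < Wpq (max y 1) := fun y =>
      hWpqpos _ (lt_of_lt_of_le one_pos (le_max_right _ _))
    have hg : Continuous g := by
      refine Continuous.sub (Continuous.log (by fun_prop) fun y => (hpos y).ne') (by fun_prop)
    have hgd : ∀ u y, 1 ≤ y → 1 ≤ u + y →
        g (u + y) - g y = Real.log (Wpq (u + y) / Wpq y) - φ * u := by
      intro u y hy huy
      have h1 := hWpqpos y (by linarith)
      have h2 := hWpqpos (u + y) (by linarith)
      simp only [g]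
      rw [max_eq_left hy, max_eq_left huy, Real.log_div h2.ne' h1.ne']
      ring
    have hlim : ∀ u, Tendsto (fun y => g (u + y) - g y) atTop (nhds 0) := by
      intro u
      have h1 := ((hasymp u).log (Real.exp_pos _).ne').sub_const (φ * u)
      rw [Real.log_exp, sub_self] at h1
      refine h1.congr' ?_
      filter_upwards [eventually_ge_atTop 1, eventually_ge_atTop (1 - u)] with y hy hy'
      exact (hgd u y hy (by linarith)).symm
    obtain ⟨C, Y, hCY⟩ := incr_bounded g hg hlim x hx
    refine ⟨Real.exp (C + |φ| * x), ?_⟩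
    filter_upwards [eventually_ge_atTop 1, eventually_ge_atTop Y] with y hy hyY u hu
    have h1 := hWpqpos y (by linarith)
    have h2 := hWpqpos (u + y) (by linarith [hu.1])
    have h3 := (abs_le.1 (hCY u hu y hyY)).2
    rw [hgd u y hy (by linarith [hu.1])] at h3
    have h4 : 0 < Wpq (u + y) / Wpq y := div_pos h2 h1
    rw [abs_of_pos h4, ← Real.log_le_iff_le_exp h4]
    have h5 : φ * u ≤ |φ| * x :=
      mul_le_mul (le_abs_self φ) hu.2 hu.1 (abs_nonneg _)
    linarith
  have hI : Tendsto (fun y => ∫ w in (0:ℝ)..x, Wq w * (Wpq (x + y - w) / Wpq y)) atTop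
      (nhds (∫ w in (0:ℝ)..x, Wq w * Real.exp (φ * (x - w)))) := by
    refine intervalIntegral.tendsto_integral_filter_of_dominated_convergence
      (fun w => Wq w * C) ?_ ?_ ?_ ?_
    · refine Eventually.of_forall fun y => ?_
      exact Continuous.aestronglyMeasurable (by fun_prop)
    · filter_upwards [hC] with y hy
      refine ae_of_all _ fun w hw => ?_
      rw [uIoc_of_le hx] at hw
      have h1 := hy (x - w) ⟨by linarith [hw.2], by linarith [hw.1]⟩
      have e : x - w + y = x + y - w := by ring
      rw [e] at h1
      rw [norm_mul, Real.norm_of_nonneg (hWqnn w), Real.norm_eq_abs]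
      exact mul_le_mul_of_nonneg_left h1 (hWqnn w)
    · exact Continuous.intervalIntegrable (by fun_prop) _ _
    · refine ae_of_all _ fun w _ => ?_
      refine ((hasymp (x - w)).congr fun y => ?_).const_mul (Wq w)
      rw [show x - w + y = x + y - w by ring]
  have hint : IntegrableOn (fun w => Wq w * Real.exp (-φ * w)) (Ioi 0) := by
    by_contra hn
    rw [integral_undef hn] at hLT
    have : 0 < 1 / θ := by positivity
    linarith
  have hsplit : (∫ w in (0:ℝ)..x, Wq w * Real.exp (-φ * w))
      + (∫ w in Ioi x, Wq w * Real.exp (-φ * w)) = 1 / θ := by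
    rw [← hLT, intervalIntegral.integral_of_le hx, ← setIntegral_union (Ioc_disjoint_Ioi le_rfl)
      measurableSet_Ioi (hint.mono_set Ioc_subset_Ioi_self)
      (hint.mono_set (Ioi_subset_Ioi hx)), Ioc_union_Ioi_eq_Ioi hx]
  have hshift : (∫ w in Ioi (0:ℝ), Wq (x + w) * Real.exp (-φ * w))
      = Real.exp (φ * x) * ∫ w in Ioi x, Wq w * Real.exp (-φ * w) := by
    have h1 := (measurePreserving_add_left volume x).setIntegral_preimage_emb
      (measurableEmbedding_addLeft x) (fun w => Wq w * Real.exp (-φ * w)) (Ioi x)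
    rw [preimage_const_add_Ioi, sub_self] at h1
    rw [← h1, ← integral_const_mul]
    congr 1
    ext w
    rw [mul_left_comm, ← Real.exp_add]
    congr 2
    ring
  have hI2 : (∫ w in (0:ℝ)..x, Wq w * Real.exp (φ * (x - w)))
      = Real.exp (φ * x) * ∫ w in (0:ℝ)..x, Wq w * Real.exp (-φ * w) := by
    rw [← intervalIntegral.integral_const_mul]
    congr 1
    ext w
    rw [mul_left_comm, ← Real.exp_add]
    congr 2
    ring
  have hval : (∫ w in Ioi (0:ℝ), Wq (x + w) * Real.exp (-φ * w))
      = Real.exp (φ * x) / θ - ∫ w in (0:ℝ)..x, Wq w * Real.exp (φ * (x - w)) := by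
    rw [hshift, hI2, div_eq_mul_one_div, ← hsplit]
    ring
  rw [hval]
  refine (((hasymp x).div_const θ).sub hI).congr' ?_
  filter_upwards [eventually_gt_atTop 0] with y hy
  have h1 := (hWpqpos y hy).ne'
  have e : (∫ w in (0:ℝ)..x, Wq w * (Wpq (x + y - w) / Wpq y))
      = (∫ w in (0:ℝ)..x, Wq w * Wpq (x + y - w)) / Wpq y := by
    rw [← intervalIntegral.integral_div]
    congr 1
    ext w
    ring
  rw [e]
  field_simp
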